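/- Let m ∈ ℕ, let F̃ be a real normed space, let J : ℝ^m → F̃ be a nonzero linear map, let X be a standard Gaussian vector in ℝ^m, let ‖J‖_{2→F} denote the operator norm of J from the Euclidean space ℓ₂^m to F̃, and set ρ = 𝔼‖J X‖_F / ‖J‖_{2→F}. Then for every λ > 1: ℙ{ ‖J X‖_F > λ · 𝔼‖J X‖_F } ≤ exp(−(λ−1)² ρ² / 2) ≤ exp(−(λ−1)² / π). -/

import Mathlib

open MeasureTheory ProbabilityTheory

/-- The distribution of a standard Gaussian vector in `ℝ^m`. -/
noncomputable def stdGaussian (m : ℕ) : Measure (Fin m → ℝ) :=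
  Measure.pi fun _ => gaussianReal 0 1

/-- The operator norm of a linear map `J` from the Euclidean space `ℓ₂^m` to a
normed space `F`. -/
noncomputable def opNorm2F {F : Type*} [NormedAddCommGroup F] [NormedSpace ℝ F]
    (m : ℕ) (J : (Fin m → ℝ) →ₗ[ℝ] F) : ℝ :=
  ⨆ x : {x : Fin m → ℝ // ∑ i, x i ^ 2 ≤ 1}, ‖J x.1‖

/-!
The Prékopa–Leindler inequality on the line, applied to functions multiplied by the Gaussian
density, gives the Gaussian measure a property (τ) with a quadratic cost: the parallelogram-type
identity `a x² + b y² - (a x + b y)² = a b (x - y)²` is what the density contributes. Property (τ)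
tensorizes, so it holds for the standard Gaussian measure in every dimension. Applied to the pair
`exp φ`, `exp (-(a / b) φ)` with `φ` Lipschitz, and combined with Jensen's inequality for the
second factor, it bounds the moment generating function of `φ - 𝔼 φ` by the Gaussian one with the
sharp constant. Chernoff's bound for `φ = ‖J ·‖`, which is `‖J‖`-Lipschitz, is the first estimate.

For the second one, a functional `g` of norm at most `1` satisfies
`𝔼 ‖J X‖ ≥ 𝔼 |g (J X)| = √(2 / π) ‖g ∘ J‖`, and choosing `g` norming gives `ρ² ≥ 2 / π`.
-/

open Filter Set Topology
open scoped ENNReal NNReal Pointwise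

lemma volume_add_volume_le_volume_add_of_isCompact {K L : Set ℝ} (hK : IsCompact K)
    (hL : IsCompact L) (hK₀ : K.Nonempty) (hL₀ : L.Nonempty) :
    volume K + volume L ≤ volume (K + L) := by
  -- The translates `sInf L + K` and `sSup K + L` both lie in `K + L` and meet in one point at most.
  have hdisj : AEDisjoint volume (sInf L +ᵥ K) (sSup K +ᵥ L) := by
    refine measure_mono_null (t := {sSup K + sInf L}) ?_ (measure_singleton _)
    rintro z ⟨⟨x, hx, rfl⟩, y, hy, hxy⟩
    have hx' := le_csSup hK.bddAbove hx
    have hy' := csInf_le hL.bddBelow hy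
    simp only [vadd_eq_add, mem_singleton_iff] at hxy ⊢
    linarith
  have hsub : (sInf L +ᵥ K) ∪ (sSup K +ᵥ L) ⊆ K + L := by
    refine union_subset ?_ (vadd_set_subset_add (hK.sSup_mem hK₀))
    rw [add_comm K L]
    exact vadd_set_subset_add (hL.sInf_mem hL₀)
  calc volume K + volume L
      = volume ((sInf L +ᵥ K) ∪ (sSup K +ᵥ L)) := by
        rw [measure_union₀ (hL.vadd _).measurableSet.nullMeasurableSet hdisj, measure_vadd,
          measure_vadd]
    _ ≤ volume (K + L) := measure_mono hsub

lemma volume_add_volume_le_volume_add {s t : Set ℝ} (hs : MeasurableSet s) (ht : MeasurableSet t)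
    (hs₀ : s.Nonempty) (ht₀ : t.Nonempty) : volume s + volume t ≤ volume (s + t) := by
  obtain ⟨x, hx⟩ := hs₀
  obtain ⟨y, hy⟩ := ht₀
  rw [hs.measure_eq_iSup_isCompact, ht.measure_eq_iSup_isCompact]
  simp_rw [iSup_and']
  refine ENNReal.biSup_add_biSup_le' ⟨∅, by simp⟩ ⟨∅, by simp⟩ ?_
  rintro K ⟨hKs, hK⟩ L ⟨hLt, hL⟩
  calc volume K + volume L ≤ volume (insert x K) + volume (insert y L) := by
        gcongr <;> exact subset_insert _ _
    _ ≤ volume (insert x K + insert y L) :=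
        volume_add_volume_le_volume_add_of_isCompact (hK.insert x) (hL.insert y)
          (insert_nonempty _ _) (insert_nonempty _ _)
    _ ≤ volume (s + t) :=
        measure_mono (add_subset_add (insert_subset hx hKs) (insert_subset hy hLt))

lemma lintegral_eq_setLIntegral_meas_ofReal_lt {α : Type*} [MeasurableSpace α] (μ : Measure α)
    [SFinite μ] {f : α → ℝ≥0∞} (hf : Measurable f) :
    ∫⁻ x, f x ∂μ = ∫⁻ s in Ioi (0 : ℝ), μ {x | ENNReal.ofReal s < f x} := by
  have hS : MeasurableSet {p : ℝ × α | ENNReal.ofReal p.1 < f p.2} :=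
    measurableSet_lt (by fun_prop) (by fun_prop)
  have hsection (x : α) : volume.restrict (Ioi 0) {s : ℝ | ENNReal.ofReal s < f x} = f x := by
    rw [Measure.restrict_apply (measurableSet_lt (by fun_prop) (by fun_prop))]
    obtain hx | hx := eq_or_ne (f x) ∞
    · simp [hx]
    · have : {s : ℝ | ENNReal.ofReal s < f x} ∩ Ioi 0 = Ioo 0 (f x).toReal := by
        ext s
        simp only [mem_inter_iff, mem_ofPred_eq, mem_Ioi, mem_Ioo, and_comm (b := 0 < s)]
        exact and_congr_right fun hs ↦ ENNReal.ofReal_lt_iff_lt_toReal hs.le hx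
      rw [this, Real.volume_Ioo, sub_zero, ENNReal.ofReal_toReal hx]
  calc ∫⁻ x, f x ∂μ
      = ((volume.restrict (Ioi 0)).prod μ) {p : ℝ × α | ENNReal.ofReal p.1 < f p.2} := by
        rw [Measure.prod_apply_symm hS]
        exact lintegral_congr fun x ↦ (hsection x).symm
    _ = ∫⁻ s in Ioi (0 : ℝ), μ {x | ENNReal.ofReal s < f x} := Measure.prod_apply hS

lemma ennreal_geom_mean_le_arith_mean2_weighted {a b : ℝ} (ha : 0 < a) (hb : 0 < b)
    (hab : a + b = 1) (p q : ℝ≥0∞) :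
    p ^ a * q ^ b ≤ ENNReal.ofReal a * p + ENNReal.ofReal b * q := by
  have hconj : a⁻¹.HolderConjugate b⁻¹ := Real.HolderConjugate.inv_inv ha hb hab
  have := ENNReal.young_inequality (p ^ a) (q ^ b) hconj
  rwa [← ENNReal.rpow_mul, ← ENNReal.rpow_mul, mul_inv_cancel₀ ha.ne', mul_inv_cancel₀ hb.ne',
    ENNReal.rpow_one, ENNReal.rpow_one, ENNReal.ofReal_inv_of_pos ha, ENNReal.ofReal_inv_of_pos hb,
    div_eq_mul_inv, div_eq_mul_inv, inv_inv, inv_inv, mul_comm p, mul_comm q] at this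

section PrekopaLeindler

variable {a b : ℝ} {f g h : ℝ → ℝ≥0∞}

lemma smul_superlevel_add_smul_superlevel_subset (ha : 0 < a) (hb : 0 < b) (hab : a + b = 1)
    (hfgh : ∀ x y, f x ^ a * g y ^ b ≤ h (a * x + b * y)) (r : ℝ≥0∞) :
    a • {x | r < f x} + b • {x | r < g x} ⊆ {x | r < h x} := by
  rintro _ ⟨_, ⟨x, hx, rfl⟩, _, ⟨y, hy, rfl⟩, rfl⟩
  calc r = r ^ a * r ^ b := by
        rw [← ENNReal.rpow_add_of_nonneg _ _ ha.le hb.le, hab, ENNReal.rpow_one]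
    _ < f x ^ a * g y ^ b :=
        ENNReal.mul_lt_mul (ENNReal.rpow_lt_rpow hx ha) (ENNReal.rpow_lt_rpow hy hb)
    _ ≤ h (a * x + b * y) := hfgh x y

lemma ofReal_mul_lintegral_add_le_lintegral_of_iSup_eq_one (ha : 0 < a) (hb : 0 < b)
    (hab : a + b = 1) (hf : Measurable f) (hg : Measurable g) (hh : Measurable h)
    (hf₁ : ⨆ x, f x = 1) (hg₁ : ⨆ x, g x = 1)
    (hfgh : ∀ x y, f x ^ a * g y ^ b ≤ h (a * x + b * y)) :
    ENNReal.ofReal a * (∫⁻ x, f x) + ENNReal.ofReal b * (∫⁻ x, g x) ≤ ∫⁻ x, h x := by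
  have hmeas (φ : ℝ → ℝ≥0∞) : Measurable fun s : ℝ ↦ volume {x | ENNReal.ofReal s < φ x} :=
    Antitone.measurable fun s s' hs ↦
      measure_mono fun x hx ↦ (ENNReal.ofReal_le_ofReal hs).trans_lt hx
  rw [lintegral_eq_setLIntegral_meas_ofReal_lt _ hf, lintegral_eq_setLIntegral_meas_ofReal_lt _ hg,
    lintegral_eq_setLIntegral_meas_ofReal_lt _ hh, ← lintegral_const_mul _ (hmeas f),
    ← lintegral_const_mul _ (hmeas g), ← lintegral_add_left (by fun_prop)]
  refine lintegral_mono fun s ↦ ?_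
  obtain hs | hs := lt_or_ge (ENNReal.ofReal s) 1
  · have hne {φ : ℝ → ℝ≥0∞} (hφ : ⨆ x, φ x = 1) : {x | ENNReal.ofReal s < φ x}.Nonempty := by
      obtain ⟨x, hx⟩ := lt_iSup_iff.1 (hs.trans_eq hφ.symm)
      exact ⟨x, hx⟩
    calc ENNReal.ofReal a * volume {x | ENNReal.ofReal s < f x} +
          ENNReal.ofReal b * volume {x | ENNReal.ofReal s < g x}
        = volume (a • {x | ENNReal.ofReal s < f x}) +
          volume (b • {x | ENNReal.ofReal s < g x}) := by
          simp [abs_of_pos ha, abs_of_pos hb]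
      _ ≤ volume (a • {x | ENNReal.ofReal s < f x} + b • {x | ENNReal.ofReal s < g x}) :=
          volume_add_volume_le_volume_add
            ((measurableSet_lt measurable_const hf).const_smul_of_ne_zero ha.ne')
            ((measurableSet_lt measurable_const hg).const_smul_of_ne_zero hb.ne')
            (hne hf₁).smul_set (hne hg₁).smul_set
      _ ≤ _ := measure_mono (smul_superlevel_add_smul_superlevel_subset ha hb hab hfgh _)
  · have hempty {φ : ℝ → ℝ≥0∞} (hφ : ⨆ x, φ x = 1) : {x | ENNReal.ofReal s < φ x} = ∅ :=
      eq_empty_of_forall_notMem fun x hx ↦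
        ((le_iSup φ x).trans (hφ.trans_le hs)).not_gt hx
    simp [hempty hf₁, hempty hg₁]

lemma lintegral_rpow_mul_lintegral_rpow_le_of_iSup_ne_top (ha : 0 < a) (hb : 0 < b)
    (hab : a + b = 1) (hf : Measurable f) (hg : Measurable g) (hh : Measurable h)
    (hf' : ⨆ x, f x ≠ ∞) (hg' : ⨆ x, g x ≠ ∞)
    (hfgh : ∀ x y, f x ^ a * g y ^ b ≤ h (a * x + b * y)) :
    (∫⁻ x, f x) ^ a * (∫⁻ x, g x) ^ b ≤ ∫⁻ x, h x := by
  set M := ⨆ x, f x with hM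
  set N := ⨆ x, g x with hN
  obtain hM₀ | hM₀ := eq_or_ne M 0
  · have : f = 0 := funext (by simpa [hM₀] using hM.symm)
    simp [this, ha]
  obtain hN₀ | hN₀ := eq_or_ne N 0
  · have : g = 0 := funext (by simpa [hN₀] using hN.symm)
    simp [this, hb]
  set C := M⁻¹ ^ a * N⁻¹ ^ b with hC
  have hC₀ : C ≠ 0 := by simp [hC, hM₀, hN₀, hf', hg']
  have hCtop : C ≠ ∞ := by
    rw [hC, ENNReal.inv_rpow, ENNReal.inv_rpow]
    exact ENNReal.mul_ne_top (by simp [hM₀, hf']) (by simp [hN₀, hg'])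
  have hscale (p q : ℝ≥0∞) : (M⁻¹ * p) ^ a * (N⁻¹ * q) ^ b = C * (p ^ a * q ^ b) := by
    rw [ENNReal.mul_rpow_of_nonneg _ _ ha.le, ENNReal.mul_rpow_of_nonneg _ _ hb.le, hC]
    ring
  have hlin := ofReal_mul_lintegral_add_le_lintegral_of_iSup_eq_one (f := fun x ↦ M⁻¹ * f x)
    (g := fun x ↦ N⁻¹ * g x) (h := fun x ↦ C * h x) ha hb hab (by fun_prop) (by fun_prop)
    (by fun_prop) (by rw [← ENNReal.mul_iSup, ENNReal.inv_mul_cancel hM₀ hf'])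
    (by rw [← ENNReal.mul_iSup, ENNReal.inv_mul_cancel hN₀ hg'])
    (fun x y ↦ by rw [hscale]; gcongr; exact hfgh x y)
  rw [lintegral_const_mul _ hf, lintegral_const_mul _ hg, lintegral_const_mul _ hh] at hlin
  rw [← ENNReal.mul_le_mul_iff_right hC₀ hCtop, ← hscale]
  exact (ennreal_geom_mean_le_arith_mean2_weighted ha hb hab _ _).trans hlin

theorem lintegral_rpow_mul_lintegral_rpow_le (ha : 0 < a) (hb : 0 < b) (hab : a + b = 1)
    (hf : Measurable f) (hg : Measurable g) (hh : Measurable h)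
    (hfgh : ∀ x y, f x ^ a * g y ^ b ≤ h (a * x + b * y)) :
    (∫⁻ x, f x) ^ a * (∫⁻ x, g x) ^ b ≤ ∫⁻ x, h x := by
  have htrunc {φ : ℝ → ℝ≥0∞} (hφ : Measurable φ) {c : ℝ} (hc : 0 < c) :
      (∫⁻ x, φ x) ^ c = ⨆ n : ℕ, (∫⁻ x, min (φ x) n) ^ c := by
    have hmono : Monotone fun (n : ℕ) x ↦ min (φ x) n := fun m n hmn x ↦ by dsimp only; gcongr
    have hsup (x : ℝ) : ⨆ n : ℕ, min (φ x) n = φ x := by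
      rw [← inf_iSup_eq, ENNReal.iSup_natCast, inf_top_eq]
    have := (ENNReal.orderIsoRpow c hc).map_iSup fun n : ℕ ↦ ∫⁻ x, min (φ x) n
    simp only [ENNReal.orderIsoRpow_apply] at this
    rw [← this, ← lintegral_iSup (fun n ↦ by fun_prop) hmono]
    simp_rw [hsup]
  have hbdd (φ : ℝ → ℝ≥0∞) (n : ℕ) : ⨆ x, min (φ x) n ≠ ∞ :=
    ne_top_of_le_ne_top (ENNReal.natCast_ne_top n) (iSup_le fun x ↦ min_le_right _ _)
  rw [htrunc hf ha, htrunc hg hb]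
  simp_rw [ENNReal.iSup_mul, ENNReal.mul_iSup]
  refine iSup₂_le fun m n ↦ lintegral_rpow_mul_lintegral_rpow_le_of_iSup_ne_top ha hb hab
    (by fun_prop) (by fun_prop) hh (hbdd f m) (hbdd g n) fun x y ↦ le_trans ?_ (hfgh x y)
  gcongr <;> exact min_le_left _ _

end PrekopaLeindler

section PropertyTau

/-- A weighted form of Maurey's property (τ), with exponents `a` and `b` in place of `1`; for
quadratic costs it yields concentration of Lipschitz functions. The constant `K` makes the property
homogeneous, hence stable under products. -/
def HasPropertyTau {α : Type*} [MeasurableSpace α] (μ : Measure α) (c : α → α → ℝ) (a b : ℝ) :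
    Prop :=
  ∀ ⦃f g : α → ℝ≥0∞⦄ ⦃K : ℝ≥0∞⦄, Measurable f → Measurable g →
    (∀ x y, f x ^ a * g y ^ b ≤ K * ENNReal.ofReal (Real.exp (c x y))) →
      (∫⁻ x, f x ∂μ) ^ a * (∫⁻ x, g x ∂μ) ^ b ≤ K

variable {α β : Type*} [MeasurableSpace α] [MeasurableSpace β] {μ : Measure α} {ν : Measure β}
  {a b : ℝ}

namespace HasPropertyTau

lemma map {c : β → β → ℝ} {T : α → β} (hT : Measurable T)
    (hμ : HasPropertyTau μ (fun x y ↦ c (T x) (T y)) a b) : HasPropertyTau (μ.map T) c a b := by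
  intro f g K hf hg hfg
  rw [lintegral_map hf hT, lintegral_map hg hT]
  exact hμ (hf.comp hT) (hg.comp hT) fun x y ↦ hfg _ _

lemma prod [SFinite μ] [SFinite ν] {c : α → α → ℝ} {d : β → β → ℝ} (hμ : HasPropertyTau μ c a b)
    (hν : HasPropertyTau ν d a b) :
    HasPropertyTau (μ.prod ν) (fun x y ↦ c x.1 y.1 + d x.2 y.2) a b := by
  intro f g K hf hg hfg
  rw [lintegral_prod_symm' _ hf, lintegral_prod_symm' _ hg]
  refine hν hf.lintegral_prod_left' hg.lintegral_prod_left' fun x₂ y₂ ↦ ?_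
  refine hμ (f := fun x₁ ↦ f (x₁, x₂)) (g := fun y₁ ↦ g (y₁, y₂)) (by fun_prop) (by fun_prop)
    fun x₁ y₁ ↦ (hfg _ _).trans_eq ?_
  dsimp only
  rw [add_comm, Real.exp_add, ENNReal.ofReal_mul (Real.exp_nonneg _), mul_assoc]

lemma pi {n : ℕ} {X : Fin n → Type*} [∀ i, MeasurableSpace (X i)] {μ : ∀ i, Measure (X i)}
    [∀ i, SigmaFinite (μ i)] {c : ∀ i, X i → X i → ℝ} (hμ : ∀ i, HasPropertyTau (μ i) (c i) a b) :
    HasPropertyTau (Measure.pi μ) (fun x y ↦ ∑ i, c i (x i) (y i)) a b := by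
  induction n with
  | zero =>
    intro f g K _ _ hfg
    rw [Measure.pi_of_empty μ isEmptyElim]
    simpa using hfg isEmptyElim isEmptyElim
  | succ n ih =>
    have hmap := (measurePreserving_piFinSuccAbove μ 0).symm
    rw [← hmap.map_eq]
    refine HasPropertyTau.map hmap.measurable ?_
    convert (hμ 0).prod (ih fun i ↦ hμ (Fin.succAbove 0 i)) using 3 with x y
    change ∑ i, c i (Fin.insertNth 0 x.1 x.2 i) (Fin.insertNth 0 y.1 y.2 i) = _
    rw [Fin.sum_univ_succAbove _ 0]
    simp only [Fin.insertNth_apply_same, Fin.insertNth_apply_succAbove]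

end HasPropertyTau

lemma ofReal_exp_integral_le_lintegral [IsProbabilityMeasure μ] {φ : α → ℝ} (hφ : Integrable φ μ) :
    ENNReal.ofReal (Real.exp (∫ x, φ x ∂μ)) ≤ ∫⁻ x, ENNReal.ofReal (Real.exp (φ x)) ∂μ := by
  obtain hfin | hfin := eq_or_ne (∫⁻ x, ENNReal.ofReal (Real.exp (φ x)) ∂μ) ∞
  · simp [hfin]
  have hexp : Integrable (fun x ↦ Real.exp (φ x)) μ :=
    (lintegral_ofReal_ne_top_iff_integrable (Real.continuous_exp.comp_aestronglyMeasurable hφ.1)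
      (ae_of_all _ fun x ↦ Real.exp_nonneg _)).1 hfin
  rw [← ofReal_integral_eq_lintegral_ofReal hexp (ae_of_all _ fun x ↦ Real.exp_nonneg _)]
  exact ENNReal.ofReal_le_ofReal <| convexOn_exp.map_integral_le Real.continuous_exp.continuousOn
    isClosed_univ (ae_of_all _ fun _ ↦ mem_univ _) hφ hexp

lemma HasPropertyTau.lintegral_exp_le [IsProbabilityMeasure μ] {c : α → α → ℝ}
    (hμ : HasPropertyTau μ c a b) (ha : 0 < a) (hb : 0 < b) {φ : α → ℝ} (hφ : Measurable φ)
    (hφ_int : Integrable φ μ) {q : ℝ} (hφc : ∀ x y, a * (φ x - φ y) ≤ a * q + c x y) :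
    ∫⁻ x, ENNReal.ofReal (Real.exp (φ x)) ∂μ ≤ ENNReal.ofReal (Real.exp (∫ x, φ x ∂μ + q)) := by
  set I := ∫ x, φ x ∂μ with hI
  have hrpow (r p : ℝ) : ENNReal.ofReal (Real.exp r) ^ p = ENNReal.ofReal (Real.exp (r * p)) := by
    rw [ENNReal.ofReal_rpow_of_pos (Real.exp_pos _), Real.exp_mul]
  have hmul (r s : ℝ) : ENNReal.ofReal (Real.exp r) * ENNReal.ofReal (Real.exp s) =
      ENNReal.ofReal (Real.exp (r + s)) := by
    rw [← ENNReal.ofReal_mul (Real.exp_nonneg _), Real.exp_add]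
  have htau : (∫⁻ x, ENNReal.ofReal (Real.exp (φ x)) ∂μ) ^ a *
      (∫⁻ x, ENNReal.ofReal (Real.exp (-(a / b) * φ x)) ∂μ) ^ b ≤
        ENNReal.ofReal (Real.exp (a * q)) := by
    refine hμ (by fun_prop) (by fun_prop) fun x y ↦ ?_
    rw [hrpow, hrpow, hmul, hmul]
    refine ENNReal.ofReal_le_ofReal (Real.exp_le_exp.2 ?_)
    have hcancel : -(a / b) * φ y * b = -(a * φ y) := by field
    linarith [hφc x y]
  have hjensen : ENNReal.ofReal (Real.exp (-(a / b) * I)) ≤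
      ∫⁻ x, ENNReal.ofReal (Real.exp (-(a / b) * φ x)) ∂μ := by
    rw [hI, ← integral_const_mul]
    exact ofReal_exp_integral_le_lintegral (hφ_int.const_mul _)
  rw [← ENNReal.rpow_le_rpow_iff ha, hrpow]
  calc (∫⁻ x, ENNReal.ofReal (Real.exp (φ x)) ∂μ) ^ a
      = (∫⁻ x, ENNReal.ofReal (Real.exp (φ x)) ∂μ) ^ a *
          ENNReal.ofReal (Real.exp (-(a / b) * I)) ^ b * ENNReal.ofReal (Real.exp (a * I)) := by
        rw [hrpow, mul_assoc, hmul, show -(a / b) * I * b + a * I = 0 by field]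
        simp
    _ ≤ ENNReal.ofReal (Real.exp (a * q)) * ENNReal.ofReal (Real.exp (a * I)) := by
        gcongr
        exact le_trans (by gcongr) htau
    _ = ENNReal.ofReal (Real.exp ((I + q) * a)) := by
        rw [hmul]
        ring_nf

end PropertyTau

section Gaussian

lemma gaussianPDFReal_rpow_mul_rpow_mul_exp (m : ℝ) {v : ℝ≥0} (hv : v ≠ 0) {a b : ℝ}
    (hab : a + b = 1) (x y : ℝ) :
    gaussianPDFReal m v x ^ a * gaussianPDFReal m v y ^ b *
        Real.exp (a * b * (x - y) ^ 2 / (2 * v)) = gaussianPDFReal m v (a * x + b * y) := by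
  have hC : 0 < (√(2 * Real.pi * v))⁻¹ := by positivity
  obtain rfl : b = 1 - a := by linarith
  simp only [gaussianPDFReal]
  rw [Real.mul_rpow hC.le (Real.exp_nonneg _), Real.mul_rpow hC.le (Real.exp_nonneg _),
    mul_mul_mul_comm, ← Real.rpow_add hC, hab, Real.rpow_one, ← Real.exp_mul, ← Real.exp_mul,
    ← Real.exp_add, mul_assoc, ← Real.exp_add]
  congr 2
  field

lemma gaussianPDF_rpow_mul_rpow_mul_exp (m : ℝ) {v : ℝ≥0} (hv : v ≠ 0) {a b : ℝ}
    (ha : 0 < a) (hb : 0 < b) (hab : a + b = 1) (x y : ℝ) :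
    gaussianPDF m v x ^ a * gaussianPDF m v y ^ b *
        ENNReal.ofReal (Real.exp (a * b * (x - y) ^ 2 / (2 * v))) =
      gaussianPDF m v (a * x + b * y) := by
  have hpdf := gaussianPDFReal_nonneg m v
  rw [gaussianPDF, gaussianPDF, gaussianPDF, ← gaussianPDFReal_rpow_mul_rpow_mul_exp m hv hab,
    ENNReal.ofReal_rpow_of_nonneg (hpdf x) ha.le, ENNReal.ofReal_rpow_of_nonneg (hpdf y) hb.le,
    ← ENNReal.ofReal_mul (Real.rpow_nonneg (hpdf x) a), ← ENNReal.ofReal_mul]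
  exact mul_nonneg (Real.rpow_nonneg (hpdf x) a) (Real.rpow_nonneg (hpdf y) b)

lemma lintegral_gaussianReal (m : ℝ) {v : ℝ≥0} (hv : v ≠ 0) {f : ℝ → ℝ≥0∞} (hf : Measurable f) :
    ∫⁻ x, f x ∂gaussianReal m v = ∫⁻ x, gaussianPDF m v x * f x := by
  rw [gaussianReal_of_var_ne_zero _ hv,
    lintegral_withDensity_eq_lintegral_mul _ (measurable_gaussianPDF m v) hf]
  rfl

lemma hasPropertyTau_gaussianReal (m : ℝ) {v : ℝ≥0} (hv : v ≠ 0) {a b : ℝ} (ha : 0 < a)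
    (hb : 0 < b) (hab : a + b = 1) :
    HasPropertyTau (gaussianReal m v) (fun x y ↦ a * b * (x - y) ^ 2 / (2 * v)) a b := by
  intro f g K hf hg hfg
  have hpdf := measurable_gaussianPDF m v
  have hPL := lintegral_rpow_mul_lintegral_rpow_le (f := fun x ↦ gaussianPDF m v x * f x)
    (g := fun x ↦ gaussianPDF m v x * g x) (h := fun x ↦ K * gaussianPDF m v x) ha hb hab
    (by fun_prop) (by fun_prop) (by fun_prop) fun x y ↦ by
      calc (gaussianPDF m v x * f x) ^ a * (gaussianPDF m v y * g y) ^ b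
          = gaussianPDF m v x ^ a * gaussianPDF m v y ^ b * (f x ^ a * g y ^ b) := by
            rw [ENNReal.mul_rpow_of_nonneg _ _ ha.le, ENNReal.mul_rpow_of_nonneg _ _ hb.le,
              mul_mul_mul_comm]
        _ ≤ gaussianPDF m v x ^ a * gaussianPDF m v y ^ b *
            (K * ENNReal.ofReal (Real.exp (a * b * (x - y) ^ 2 / (2 * v)))) := by
            exact mul_le_mul' le_rfl (hfg x y)
        _ = K * gaussianPDF m v (a * x + b * y) := by
            rw [mul_left_comm, gaussianPDF_rpow_mul_rpow_mul_exp m hv ha hb hab]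
  rwa [lintegral_const_mul _ hpdf, lintegral_gaussianPDF_eq_one m hv, mul_one,
    ← lintegral_gaussianReal m hv hf, ← lintegral_gaussianReal m hv hg] at hPL

variable {E : Type*} [NormedAddCommGroup E] [InnerProductSpace ℝ E] [FiniteDimensional ℝ E]
  [MeasurableSpace E] [BorelSpace E]

variable (E) in
lemma hasPropertyTau_stdGaussian {a b : ℝ} (ha : 0 < a) (hb : 0 < b) (hab : a + b = 1) :
    HasPropertyTau (ProbabilityTheory.stdGaussian E) (fun x y ↦ a * b * ‖x - y‖ ^ 2 / 2) a b := by
  refine HasPropertyTau.map (by fun_prop) ?_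
  convert HasPropertyTau.pi fun _ ↦ hasPropertyTau_gaussianReal 0 one_ne_zero ha hb hab with x y
  have hnorm : ‖∑ i, x i • stdOrthonormalBasis ℝ E i - ∑ i, y i • stdOrthonormalBasis ℝ E i‖ ^ 2 =
      ∑ i, (x i - y i) ^ 2 := by
    simp only [← Finset.sum_sub_distrib, ← sub_smul]
    rw [← EuclideanSpace.real_norm_sq_eq (WithLp.toLp 2 fun i ↦ x i - y i),
      ← (stdOrthonormalBasis ℝ E).repr.symm.norm_map, ← OrthonormalBasis.sum_repr_symm]
  rw [hnorm, Finset.mul_sum, Finset.sum_div]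
  simp

lemma integrable_stdGaussian_of_lipschitzWith {ψ : E → ℝ} {K : ℝ≥0} (hψ : LipschitzWith K ψ) :
    Integrable ψ (ProbabilityTheory.stdGaussian E) := by
  have hbound : Integrable (fun x : E ↦ ‖ψ 0‖ + K * ‖x‖) (ProbabilityTheory.stdGaussian E) :=
    (integrable_const _).add (IsGaussian.integrable_id.norm.const_mul _)
  refine hbound.mono' hψ.continuous.aestronglyMeasurable (ae_of_all _ fun x ↦ ?_)
  have hx := hψ.norm_sub_le x 0
  rw [sub_zero] at hx
  linarith [norm_le_norm_add_norm_sub' (ψ x) (ψ 0)]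

lemma lintegral_exp_stdGaussian_le_of_lipschitzWith {ψ : E → ℝ} {K : ℝ≥0}
    (hψ : LipschitzWith K ψ) :
    ∫⁻ x, ENNReal.ofReal (Real.exp (ψ x)) ∂ProbabilityTheory.stdGaussian E ≤
      ENNReal.ofReal (Real.exp (∫ x, ψ x ∂ProbabilityTheory.stdGaussian E + K ^ 2 / 2)) := by
  set I := ∫ x, ψ x ∂ProbabilityTheory.stdGaussian E
  have hbound (b : ℝ) (hb : b ∈ Ioo 0 1) :
      ∫⁻ x, ENNReal.ofReal (Real.exp (ψ x)) ∂ProbabilityTheory.stdGaussian E ≤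
        ENNReal.ofReal (Real.exp (I + K ^ 2 / (2 * b))) := by
    obtain ⟨hb₀, hb₁⟩ := hb
    have ha : 0 < 1 - b := sub_pos.2 hb₁
    refine (hasPropertyTau_stdGaussian E ha hb₀ (sub_add_cancel 1 b)).lintegral_exp_le ha hb₀
      hψ.continuous.measurable (integrable_stdGaussian_of_lipschitzWith hψ) fun x y ↦ ?_
    have hlip : ψ x - ψ y ≤ K * ‖x - y‖ := (le_abs_self _).trans (hψ.norm_sub_le x y)
    have hyoung : K * ‖x - y‖ ≤ K ^ 2 / (2 * b) + b * ‖x - y‖ ^ 2 / 2 := by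
      have hsq : K ^ 2 / (2 * b) + b * ‖x - y‖ ^ 2 / 2 - K * ‖x - y‖ =
          (K - b * ‖x - y‖) ^ 2 / (2 * b) := by field
      have : (0 : ℝ) ≤ (K - b * ‖x - y‖) ^ 2 / (2 * b) := by positivity
      linarith
    calc (1 - b) * (ψ x - ψ y)
        ≤ (1 - b) * (K ^ 2 / (2 * b) + b * ‖x - y‖ ^ 2 / 2) := by
          gcongr
          exact hlip.trans hyoung
      _ = (1 - b) * (K ^ 2 / (2 * b)) + (1 - b) * b * ‖x - y‖ ^ 2 / 2 := by ring
  -- Property (τ) degenerates at `b = 1`, but the bounds it yields for `b < 1` have a limit there.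
  have hlim : Tendsto (fun b : ℝ ↦ ENNReal.ofReal (Real.exp (I + K ^ 2 / (2 * b)))) (𝓝[<] 1)
      (𝓝 (ENNReal.ofReal (Real.exp (I + K ^ 2 / (2 * 1))))) := by
    have hcont : ContinuousAt (fun b : ℝ ↦ Real.exp (I + K ^ 2 / (2 * b))) 1 := by
      fun_prop (disch := norm_num)
    exact (ENNReal.tendsto_ofReal hcont.tendsto).mono_left nhdsWithin_le_nhds
  rw [mul_one] at hlim
  exact ge_of_tendsto hlim (eventually_of_mem (Ioo_mem_nhdsLT one_pos) hbound)

lemma hasSubgaussianMGF_stdGaussian_of_lipschitzWith {ψ : E → ℝ} {K : ℝ≥0}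
    (hψ : LipschitzWith K ψ) :
    HasSubgaussianMGF (fun x ↦ ψ x - ∫ y, ψ y ∂ProbabilityTheory.stdGaussian E) (K ^ 2)
      (ProbabilityTheory.stdGaussian E) := by
  set I := ∫ y, ψ y ∂ProbabilityTheory.stdGaussian E
  have hbound (t : ℝ) : ∫⁻ x, ENNReal.ofReal (Real.exp (t * (ψ x - I)))
      ∂ProbabilityTheory.stdGaussian E ≤ ENNReal.ofReal (Real.exp ((K ^ 2 : ℝ≥0) * t ^ 2 / 2)) := by
    have hlip : LipschitzWith (‖t‖₊ * K) fun x ↦ t * (ψ x - I) := by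
      simpa using! (lipschitzWith_smul t).comp (hψ.sub (LipschitzWith.const I))
    refine (lintegral_exp_stdGaussian_le_of_lipschitzWith hlip).trans_eq ?_
    rw [integral_const_mul, integral_sub (integrable_stdGaussian_of_lipschitzWith hψ)
      (integrable_const I)]
    simp [I, mul_pow, mul_comm]
  have hmeas (t : ℝ) : AEStronglyMeasurable (fun x ↦ Real.exp (t * (ψ x - I)))
      (ProbabilityTheory.stdGaussian E) := by
    have := hψ.continuous
    exact Continuous.aestronglyMeasurable (by fun_prop)
  refine ⟨fun t ↦ ?_, fun t ↦ ?_⟩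
  · exact (lintegral_ofReal_ne_top_iff_integrable (hmeas t)
      (ae_of_all _ fun x ↦ Real.exp_nonneg _)).1 ((hbound t).trans_lt ENNReal.ofReal_lt_top).ne
  · rw [mgf, integral_eq_lintegral_of_nonneg_ae (ae_of_all _ fun x ↦ Real.exp_nonneg _) (hmeas t)]
    exact ENNReal.toReal_le_of_le_ofReal (Real.exp_nonneg _) (hbound t)

lemma integral_abs_gaussianReal (v : ℝ≥0) : ∫ x, |x| ∂gaussianReal 0 v = √(2 * v / Real.pi) := by
  obtain rfl | hv := eq_or_ne v 0
  · simp
  have hpdf (x : ℝ) : gaussianPDFReal 0 v x • |x| =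
      (√(2 * Real.pi * v))⁻¹ * (|x| ^ (1 : ℝ) * Real.exp (-(2 * v : ℝ)⁻¹ * |x| ^ (2 : ℝ))) := by
    simp only [gaussianPDFReal, sub_zero, smul_eq_mul, Real.rpow_one, Real.rpow_ofNat, sq_abs]
    ring_nf
  have hsqrt : √(2 * Real.pi * v) * √(2 * v / Real.pi) = 2 * v := by
    rw [← Real.sqrt_mul (by positivity),
      show 2 * Real.pi * v * (2 * v / Real.pi) = (2 * v : ℝ) ^ 2 by field,
      Real.sqrt_sq (by positivity)]
  calc ∫ x, |x| ∂gaussianReal 0 v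
      = ∫ x : ℝ, (√(2 * Real.pi * v))⁻¹ *
          (|x| ^ (1 : ℝ) * Real.exp (-(2 * v : ℝ)⁻¹ * |x| ^ (2 : ℝ))) := by
        rw [integral_gaussianReal_eq_integral_smul hv]
        exact integral_congr_ae (ae_of_all _ hpdf)
    _ = (√(2 * Real.pi * v))⁻¹ * (2 * v) := by
        rw [integral_comp_abs (f := fun r : ℝ ↦ (√(2 * Real.pi * v))⁻¹ *
            (r ^ (1 : ℝ) * Real.exp (-(2 * v : ℝ)⁻¹ * r ^ (2 : ℝ)))), integral_const_mul,
          integral_rpow_mul_exp_neg_mul_rpow (by norm_num) (by norm_num) (by positivity)]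
        norm_num only [Real.rpow_neg_one, Real.Gamma_one, inv_inv]
        ring
    _ = √(2 * v / Real.pi) :=
        (inv_mul_eq_iff_eq_mul₀ (by positivity)).2 hsqrt.symm

lemma integral_abs_strongDual_stdGaussian (L : StrongDual ℝ E) :
    ∫ x, |L x| ∂ProbabilityTheory.stdGaussian E = √(2 / Real.pi) * ‖L‖ := by
  calc ∫ x, |L x| ∂ProbabilityTheory.stdGaussian E
      = ∫ r, |r| ∂(ProbabilityTheory.stdGaussian E).map L := by
        rw [integral_map (by fun_prop) (by fun_prop)]
    _ = √(2 * (‖L‖ ^ 2).toNNReal / Real.pi) := by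
        rw [IsGaussian.map_eq_gaussianReal, integral_strongDual_stdGaussian,
          variance_dual_stdGaussian, integral_abs_gaussianReal]
    _ = √(2 / Real.pi) * ‖L‖ := by
        rw [Real.coe_toNNReal _ (by positivity), mul_div_right_comm, Real.sqrt_mul (by positivity),
          Real.sqrt_sq (norm_nonneg L)]

variable {F : Type*} [NormedAddCommGroup F] [NormedSpace ℝ F]

lemma integrable_norm_stdGaussian (J : E →L[ℝ] F) :
    Integrable (fun x ↦ ‖J x‖) (ProbabilityTheory.stdGaussian E) :=
  integrable_stdGaussian_of_lipschitzWith (lipschitzWith_one_norm.comp J.lipschitz)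

lemma sqrt_two_div_pi_mul_norm_le_integral_norm_stdGaussian (J : E →L[ℝ] F) :
    √(2 / Real.pi) * ‖J‖ ≤ ∫ x, ‖J x‖ ∂ProbabilityTheory.stdGaussian E := by
  have hc : 0 < √(2 / Real.pi) := by positivity
  rw [← le_div_iff₀' hc]
  refine J.opNorm_le_bound (div_nonneg (integral_nonneg fun _ ↦ norm_nonneg _) hc.le) fun x ↦ ?_
  obtain ⟨g, hg, hgx⟩ := exists_dual_vector'' ℝ (J x)
  rw [RCLike.ofReal_real_eq_id, id] at hgx
  have hle : √(2 / Real.pi) * ‖g ∘L J‖ ≤ ∫ x, ‖J x‖ ∂ProbabilityTheory.stdGaussian E := by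
    rw [← integral_abs_strongDual_stdGaussian]
    refine integral_mono_of_nonneg (ae_of_all _ fun _ ↦ abs_nonneg _)
      (integrable_norm_stdGaussian J) (ae_of_all _ fun y ↦ ?_)
    exact (g.le_opNorm (J y)).trans (mul_le_of_le_one_left (norm_nonneg _) hg)
  calc ‖J x‖ = (g ∘L J) x := hgx.symm
    _ ≤ ‖g ∘L J‖ * ‖x‖ := (le_abs_self _).trans ((g ∘L J).le_opNorm x)
    _ ≤ _ := by
      gcongr
      rwa [le_div_iff₀' hc]

lemma stdGaussian_integral_add_lt_norm_le (J : E →L[ℝ] F) {ε : ℝ} (hε : 0 ≤ ε) :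
    ProbabilityTheory.stdGaussian E
        {x | ∫ y, ‖J y‖ ∂ProbabilityTheory.stdGaussian E + ε < ‖J x‖} ≤
      ENNReal.ofReal (Real.exp (-ε ^ 2 / (2 * ‖J‖ ^ 2))) := by
  have hlip : LipschitzWith ‖J‖₊ fun x ↦ ‖J x‖ := by
    simpa using! lipschitzWith_one_norm.comp J.lipschitz
  have htail := (hasSubgaussianMGF_stdGaussian_of_lipschitzWith hlip).measure_ge_le hε
  rw [NNReal.coe_pow, coe_nnnorm] at htail
  refine le_trans (measure_mono fun x hx ↦ ?_)
    ((ENNReal.le_ofReal_iff_toReal_le (measure_ne_top _ _) (Real.exp_nonneg _)).2 htail)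
  exact le_sub_iff_add_le'.2 (mem_ofPred_eq ▸ hx : _ < _).le

theorem stmt18_general (J : E →L[ℝ] F) (hJ : J ≠ 0) {lam : ℝ} (hlam : 1 < lam) :
    ProbabilityTheory.stdGaussian E
        {x | lam * (∫ y, ‖J y‖ ∂ProbabilityTheory.stdGaussian E) < ‖J x‖} ≤
      ENNReal.ofReal (Real.exp (-(lam - 1) ^ 2 *
        ((∫ y, ‖J y‖ ∂ProbabilityTheory.stdGaussian E) / ‖J‖) ^ 2 / 2)) ∧
    Real.exp (-(lam - 1) ^ 2 *
        ((∫ y, ‖J y‖ ∂ProbabilityTheory.stdGaussian E) / ‖J‖) ^ 2 / 2) ≤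
      Real.exp (-(lam - 1) ^ 2 / Real.pi) := by
  set M := ∫ y, ‖J y‖ ∂ProbabilityTheory.stdGaussian E with hM
  have hJ₀ : 0 < ‖J‖ := norm_pos_iff.2 hJ
  have hM₀ : 0 ≤ M := integral_nonneg fun _ ↦ norm_nonneg _
  constructor
  · have htail := stdGaussian_integral_add_lt_norm_le J (mul_nonneg (sub_pos.2 hlam).le hM₀)
    rw [← hM, show M + (lam - 1) * M = lam * M by ring] at htail
    convert htail using 3
    field
  · have hρ : 2 / Real.pi ≤ (M / ‖J‖) ^ 2 := by
      rw [← Real.sqrt_le_left (by positivity), le_div_iff₀ hJ₀]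
      exact sqrt_two_div_pi_mul_norm_le_integral_norm_stdGaussian J
    refine Real.exp_le_exp.2 ?_
    calc -(lam - 1) ^ 2 * (M / ‖J‖) ^ 2 / 2 ≤ -(lam - 1) ^ 2 * (2 / Real.pi) / 2 := by
          have := mul_le_mul_of_nonneg_left hρ (sq_nonneg (lam - 1))
          linarith
      _ = -(lam - 1) ^ 2 / Real.pi := by ring

end Gaussian

lemma measurePreserving_toLp_stdGaussian (m : ℕ) :
    MeasurePreserving (MeasurableEquiv.toLp 2 (Fin m → ℝ)) (_root_.stdGaussian m)
      (ProbabilityTheory.stdGaussian (EuclideanSpace ℝ (Fin m))) :=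
  ⟨MeasurableEquiv.measurable _, map_pi_eq_stdGaussian⟩

lemma opNorm2F_eq_norm {F : Type*} [NormedAddCommGroup F] [NormedSpace ℝ F] (m : ℕ)
    (J : (Fin m → ℝ) →ₗ[ℝ] F) :
    opNorm2F m J =
      ‖(J ∘ₗ (WithLp.linearEquiv 2 ℝ (Fin m → ℝ)).toLinearMap).toContinuousLinearMap‖ := by
  rw [← ContinuousLinearMap.sSup_unitClosedBall_eq_norm, sSup_image', opNorm2F]
  refine Equiv.iSup_congr ((WithLp.equiv 2 (Fin m → ℝ)).symm.subtypeEquiv fun x ↦ ?_) fun x ↦ rfl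
  rw [mem_closedBall_zero_iff, ← sq_le_one_iff₀ (norm_nonneg _), EuclideanSpace.real_norm_sq_eq]
  rfl

theorem stmt18 {F : Type*} [NormedAddCommGroup F] [NormedSpace ℝ F]
    (m : ℕ) (hm : 1 ≤ m)
    (J : (Fin m → ℝ) →ₗ[ℝ] F) (hJ : J ≠ 0)
    (lam : ℝ) (hlam : 1 < lam) :
    stdGaussian m {x | lam * (∫ y, ‖J y‖ ∂stdGaussian m) < ‖J x‖} ≤
      ENNReal.ofReal (Real.exp (-(lam - 1) ^ 2 *
        ((∫ y, ‖J y‖ ∂stdGaussian m) / opNorm2F m J) ^ 2 / 2)) ∧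
    Real.exp (-(lam - 1) ^ 2 * ((∫ y, ‖J y‖ ∂stdGaussian m) / opNorm2F m J) ^ 2 / 2) ≤
      Real.exp (-(lam - 1) ^ 2 / Real.pi) := by
  have hT := measurePreserving_toLp_stdGaussian m
  set J' := (J ∘ₗ (WithLp.linearEquiv 2 ℝ (Fin m → ℝ)).toLinearMap).toContinuousLinearMap
  have hJ'₀ : J' ≠ 0 := fun h ↦ hJ <| LinearMap.ext fun x ↦ DFunLike.congr_fun h (WithLp.toLp 2 x)
  have hint : ∫ y, ‖J y‖ ∂stdGaussian m = ∫ z, ‖J' z‖ ∂ProbabilityTheory.stdGaussian _ :=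
    hT.integral_comp' fun z ↦ ‖J' z‖
  have hmain := stmt18_general J' hJ'₀ hlam
  rwa [← hT.measure_preimage_equiv, ← hint, ← opNorm2F_eq_norm] at hmain
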